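/- Spatial error of the time reconstruction, third time derivative (Lemma 4.3 with ℓ = 3): assume all values of V lie in the closed subspace F. Then sup_{t ∈ [t₀,t₁]} ‖ρ₀ · (Û − PÛ)'''(t)‖_H ≤ c₃(q;3) · τ⁻² · ‖ρ₀ · P^⊥ w₀‖_H, where c₃(q;3) = 4√2 · q(q+1) · 2√3 · (q+1)² = 8√6 · q(q+1)³. -/

import Mathlib

open scoped RealInnerProductSpace
open MeasureTheory

/-- Evaluation of the `H`-valued polynomial with coefficients `c` (degree at most `k`):
`t ↦ ∑_{i=0}^{k} tⁱ • c i`. -/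
noncomputable def polyEval {H : Type*} [NormedAddCommGroup H] [NormedSpace ℝ H]
    (k : ℕ) (c : ℕ → H) (t : ℝ) : H :=
  ∑ i ∈ Finset.range (k + 1), t ^ i • c i

/-- Coefficients of the termwise derivative of the polynomial with coefficients `c`. -/
noncomputable def dC {H : Type*} [NormedAddCommGroup H] [NormedSpace ℝ H]
    (c : ℕ → H) : ℕ → H := fun i => ((i : ℝ) + 1) • c (i + 1)

/-- `u` is the coefficient function of the time reconstruction `Û` (degree at most `q+1`)
of the polynomial `V` with coefficients `v` (degree at most `q`), with jump `j`, on `[t₀, t₁]`. -/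
def IsTimeRecon {H : Type*} [NormedAddCommGroup H] [InnerProductSpace ℝ H]
    (t₀ t₁ : ℝ) (q : ℕ) (v : ℕ → H) (j : H) (u : ℕ → H) : Prop :=
  (∀ i, q + 1 < i → u i = 0) ∧
  (∀ w : ℕ → H, (∀ i, q ≤ i → w i = 0) →
    (∫ t in t₀..t₁,
        ⟪polyEval (q + 1) (dC (dC u)) t - polyEval (q + 1) (dC (dC v)) t,
          polyEval (q + 1) w t⟫) = ⟪j, polyEval (q + 1) w t₀⟫) ∧
  polyEval (q + 1) u t₀ = polyEval (q + 1) v t₀ ∧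
  polyEval (q + 1) (dC u) t₀ = polyEval (q + 1) (dC v) t₀ - j

/-- `P` is the orthogonal projection of the Hilbert space `H` onto the closed subspace `F`. -/
def IsOrthProj {H : Type*} [NormedAddCommGroup H] [InnerProductSpace ℝ H]
    (F : Submodule ℝ H) (P : H →L[ℝ] H) : Prop :=
  ∀ x : H, P x ∈ F ∧ ∀ y ∈ F, ⟪x - P x, y⟫ = 0

/-!
Pairing the defining equation of `Û` with a vector orthogonal to `F` removes `V''` from it, so that
`P^⊥ Û'' = -K • P^⊥ w₀`, where `K` is the polynomial of degree less than `q` that represents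
evaluation at `t₀` in `L²(t₀, t₁)`. It remains to bound `K'`, and by scaling one may take the
interval to be `[0, 1]`.

There `K` is orthogonal to `x p` for all `p` of degree less than `q - 1`. The Jacobi operator for
the weight `x` is symmetric and preserves degrees, which makes `K` an eigenfunction of it. The
equation at the endpoints, together with `∫ (x K²)' = ∫ K² + 2 ∫ x K K'` and
`∫ (K²)' = 2 ∫ K K'`, gives `K(0) = q²` and `K(1)² = q²`. Differentiating the equation gives a
Jacobi equation for `K'`; its Sonin function is first decreasing and then increasing, so `|K'|` is
largest at an endpoint, and therefore `|K'| ≤ -K'(0) = q² (q² - 1) / 2`.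
-/

section JacobiOperator

open Polynomial

theorem X_mul_mem_degreeLT {R : Type*} [Semiring R] {n : ℕ} {p : R[X]}
    (hp : p ∈ degreeLT R (n - 1)) : X * p ∈ degreeLT R n := by
  rw [mem_degreeLT, degree_lt_iff_coeff_zero] at hp ⊢
  rintro (_ | i) hi
  · exact coeff_X_mul_zero p
  · rw [coeff_X_mul, hp i (by omega)]

theorem derivative_mem_degreeLT {R : Type*} [Semiring R] {n : ℕ} {p : R[X]}
    (hp : p ∈ degreeLT R n) : derivative p ∈ degreeLT R (n - 1) := by
  rw [mem_degreeLT, degree_lt_iff_coeff_zero] at hp ⊢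
  intro i hi
  rw [coeff_derivative, hp _ (by omega), zero_mul]

theorem comp_mem_degreeLT {R : Type*} [Semiring R] {n : ℕ} {p r : R[X]}
    (hp : p ∈ degreeLT R n) (hr : r.natDegree ≤ 1) : p.comp r ∈ degreeLT R n := by
  rw [mem_degreeLT] at hp ⊢
  by_cases hpr : p.comp r = 0
  · simp [hpr]
  · have hp0 : p ≠ 0 := fun h => hpr (by simp [h])
    rw [← natDegree_lt_iff_degree_lt hp0] at hp
    rw [← natDegree_lt_iff_degree_lt hpr]
    calc (p.comp r).natDegree ≤ p.natDegree * r.natDegree := natDegree_comp_le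
      _ ≤ p.natDegree := mul_le_of_le_one_right' hr
      _ < n := hp

/-- The Jacobi differential operator, transported from `[-1, 1]` to `[0, 1]`. It is symmetric for
the weight `x ^ α * (1 - x) ^ β`, and the polynomials orthogonal for that weight are its
eigenfunctions. -/
noncomputable def jacobiOp (α β : ℝ) (p : ℝ[X]) : ℝ[X] :=
  X * (1 - X) * derivative (derivative p) + (C (α + 1) - C (α + β + 2) * X) * derivative p

theorem eval_jacobiOp (α β : ℝ) (p : ℝ[X]) (x : ℝ) :
    (jacobiOp α β p).eval x = x * (1 - x) * (derivative (derivative p)).eval x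
      + (α + 1 - (α + β + 2) * x) * (derivative p).eval x := by
  simp [jacobiOp]

theorem coeff_jacobiOp (α β : ℝ) (p : ℝ[X]) (i : ℕ) :
    (jacobiOp α β p).coeff i
      = (i + 1) * (i + α + 1) * p.coeff (i + 1) - i * (i + α + β + 1) * p.coeff i := by
  have hsplit : jacobiOp α β p = X * derivative (derivative p) - X * (X * derivative (derivative p))
      + C (α + 1) * derivative p - C (α + β + 2) * (X * derivative p) := by
    rw [jacobiOp]; ring
  simp only [hsplit, coeff_add, coeff_sub, coeff_C_mul]
  rcases i with _ | _ | i
  · simp [coeff_derivative]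
  all_goals
    simp only [coeff_X_mul, coeff_X_mul_zero, coeff_derivative]
    push_cast
    ring

theorem derivative_jacobiOp (α β : ℝ) (p : ℝ[X]) :
    derivative (jacobiOp α β p)
      = jacobiOp (α + 1) (β + 1) (derivative p) - C (α + β + 2) * derivative p := by
  simp only [jacobiOp, map_add, map_one, derivative_mul, derivative_X, derivative_sub,
    derivative_one, derivative_C]
  ring

theorem jacobiOp_mem_degreeLT (α β : ℝ) {n : ℕ} {p : ℝ[X]} (hp : p ∈ degreeLT ℝ n) :
    jacobiOp α β p ∈ degreeLT ℝ n := by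
  rw [mem_degreeLT, degree_lt_iff_coeff_zero] at hp ⊢
  intro i hi
  rw [coeff_jacobiOp, hp i hi, hp _ (by omega)]
  ring

theorem jacobiOp_add_C_mul_mem_degreeLT (α β : ℝ) {n : ℕ} {p : ℝ[X]} (hp : p ∈ degreeLT ℝ n) :
    jacobiOp α β p + C ((n - 1) * (n + α + β)) * p ∈ degreeLT ℝ (n - 1) := by
  rw [mem_degreeLT, degree_lt_iff_coeff_zero] at hp ⊢
  intro i hi
  rw [coeff_add, coeff_C_mul, coeff_jacobiOp, hp _ (by omega : n ≤ i + 1)]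
  rcases le_or_gt n i with hni | hin
  · rw [hp i hni]
    ring
  · obtain rfl : n = i + 1 := by omega
    push_cast
    ring

/-- The Sonin function `l z² + x (1 - x) z'²` of the differential equation
`jacobiOp α β z + l z = 0`. It agrees with `l z²` at both endpoints, and the sign of its derivative
does not depend on `z`, so it bounds solutions by their endpoint values. -/
noncomputable def soninFunction (l : ℝ) (z : ℝ[X]) : ℝ[X] :=
  C l * z ^ 2 + X * (1 - X) * derivative z ^ 2

theorem eval_soninFunction (l : ℝ) (z : ℝ[X]) (x : ℝ) :
    (soninFunction l z).eval x = l * z.eval x ^ 2 + x * (1 - x) * (derivative z).eval x ^ 2 := by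
  simp [soninFunction]

theorem eval_derivative_soninFunction {α β l : ℝ} {z : ℝ[X]}
    (hz : jacobiOp α β z + C l * z = 0) (x : ℝ) :
    (derivative (soninFunction l z)).eval x
      = (2 * (α + β + 1) * x - (2 * α + 1)) * (derivative z).eval x ^ 2 := by
  have ode : (jacobiOp α β z).eval x + l * z.eval x = 0 := by
    simpa using congrArg (eval x) hz
  rw [eval_jacobiOp] at ode
  simp only [soninFunction, derivative_add, derivative_mul, derivative_C, derivative_X,
    derivative_sub, derivative_one, derivative_sq, eval_add, eval_sub, eval_mul, eval_pow,
    eval_C, eval_X, eval_zero, eval_one]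
  linear_combination 2 * (derivative z).eval x * ode

theorem eval_soninFunction_le_max {α β l : ℝ} (hαβ : 0 ≤ α + β + 1) {z : ℝ[X]}
    (hz : jacobiOp α β z + C l * z = 0) {s : ℝ} (hs : s ∈ Set.Icc (0 : ℝ) 1) :
    (soninFunction l z).eval s
      ≤ max ((soninFunction l z).eval 0) ((soninFunction l z).eval 1) := by
  set f := soninFunction l z
  have hf' (x : ℝ) : deriv (fun y => f.eval y) x
      = (2 * (α + β + 1) * x - (2 * α + 1)) * (derivative z).eval x ^ 2 := by
    rw [Polynomial.deriv, eval_derivative_soninFunction hz]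
  rcases le_total (2 * (α + β + 1) * s) (2 * α + 1) with h | h
  · have hanti : AntitoneOn (fun x => f.eval x) (Set.Icc 0 s) := by
      refine antitoneOn_of_deriv_nonpos (convex_Icc _ _) f.continuous.continuousOn
        f.differentiable.differentiableOn fun x hx => ?_
      rw [interior_Icc] at hx
      rw [hf']
      exact mul_nonpos_of_nonpos_of_nonneg (by nlinarith [hx.2]) (sq_nonneg _)
    exact le_max_of_le_left (hanti ⟨le_rfl, hs.1⟩ ⟨hs.1, le_rfl⟩ hs.1)
  · have hmono : MonotoneOn (fun x => f.eval x) (Set.Icc s 1) := by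
      refine monotoneOn_of_deriv_nonneg (convex_Icc _ _) f.continuous.continuousOn
        f.differentiable.differentiableOn fun x hx => ?_
      rw [interior_Icc] at hx
      rw [hf']
      exact mul_nonneg (by nlinarith [hx.1]) (sq_nonneg _)
    exact le_max_of_le_right (hmono ⟨le_rfl, hs.2⟩ ⟨hs.2, le_rfl⟩ hs.2)

theorem sq_eval_le_max_of_jacobiOp_add_eq_zero {α β l : ℝ} (hαβ : 0 ≤ α + β + 1) (hl : 0 < l)
    {z : ℝ[X]} (hz : jacobiOp α β z + C l * z = 0) {s : ℝ} (hs : s ∈ Set.Icc (0 : ℝ) 1) :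
    z.eval s ^ 2 ≤ max (z.eval 0 ^ 2) (z.eval 1 ^ 2) := by
  have hend := eval_soninFunction_le_max hαβ hz hs
  have hnonneg : 0 ≤ s * (1 - s) * (derivative z).eval s ^ 2 :=
    mul_nonneg (mul_nonneg hs.1 (sub_nonneg.2 hs.2)) (sq_nonneg _)
  simp only [eval_soninFunction, zero_mul, sub_self, mul_zero, add_zero] at hend
  rw [← mul_max_of_nonneg _ _ hl.le] at hend
  exact le_of_mul_le_mul_left (by linarith) hl

end JacobiOperator

section PolyIntegral

open Polynomial

/-- Integration over `[a, b]` as a linear functional on polynomials. -/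
noncomputable def polyIntegral (a b : ℝ) : ℝ[X] →ₗ[ℝ] ℝ where
  toFun p := ∫ t in a..b, p.eval t
  map_add' p r := by
    simp only [eval_add]
    exact intervalIntegral.integral_add (p.continuous.intervalIntegrable _ _)
      (r.continuous.intervalIntegrable _ _)
  map_smul' c p := by
    simp only [eval_smul, RingHom.id_apply, smul_eq_mul, intervalIntegral.integral_const_mul]

theorem polyIntegral_apply (a b : ℝ) (p : ℝ[X]) : polyIntegral a b p = ∫ t in a..b, p.eval t :=
  rfl

theorem polyIntegral_C_mul (a b c : ℝ) (p : ℝ[X]) :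
    polyIntegral a b (C c * p) = c * polyIntegral a b p := by
  rw [C_mul', map_smul, smul_eq_mul]

theorem polyIntegral_derivative (a b : ℝ) (p : ℝ[X]) :
    polyIntegral a b (derivative p) = p.eval b - p.eval a :=
  intervalIntegral.integral_eq_sub_of_hasDerivAt (fun x _ => p.hasDerivAt x)
    ((derivative p).continuous.intervalIntegrable _ _)

theorem polyIntegral_comp_affine (a b : ℝ) (p : ℝ[X]) :
    (b - a) * polyIntegral 0 1 (p.comp (C (b - a) * X + C a)) = polyIntegral a b p := by
  simpa [polyIntegral_apply] using intervalIntegral.smul_integral_comp_mul_add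
    (fun t => p.eval t) (b - a) a (a := 0) (b := 1)

theorem eq_zero_of_polyIntegral_mul_sq_eq_zero {a b : ℝ} (hab : a < b) {w p : ℝ[X]}
    (hw : ∀ t ∈ Set.Ioc a b, 0 < w.eval t) (h : polyIntegral a b (w * p ^ 2) = 0) : p = 0 := by
  refine eq_zero_of_infinite_isRoot p ((Set.Ioc_infinite hab).mono fun s hs => ?_)
  by_contra hps
  refine (intervalIntegral.integral_pos (f := fun t => (w * p ^ 2).eval t) hab
    (w * p ^ 2).continuous.continuousOn (fun t ht => ?_) ⟨s, ⟨hs.1.le, hs.2⟩, ?_⟩).ne' h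
  · simpa using mul_nonneg (hw t ht).le (sq_nonneg (p.eval t))
  · simpa using mul_pos (hw s hs) (sq_pos_of_ne_zero hps)

theorem polyIntegral_jacobiOp_mul (α β : ℕ) (p r : ℝ[X]) :
    polyIntegral 0 1 (X ^ α * (1 - X) ^ β * (jacobiOp α β p * r))
      = polyIntegral 0 1 (X ^ α * (1 - X) ^ β * (p * jacobiOp α β r)) := by
  have hdiv : X ^ α * (1 - X) ^ β * (jacobiOp α β p * r)
        - X ^ α * (1 - X) ^ β * (p * jacobiOp α β r)
      = derivative (X ^ (α + 1) * (1 - X) ^ (β + 1) * (derivative p * r - p * derivative r)) := by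
    simp only [jacobiOp, map_add, map_natCast, map_one, C_ofNat, derivative_mul, derivative_pow,
      Nat.cast_add, Nat.cast_one, add_tsub_cancel_right, derivative_X, derivative_sub,
      derivative_one]
    ring
  rw [← sub_eq_zero, ← map_sub, hdiv, polyIntegral_derivative]
  simp

end PolyIntegral

section EvalKernel

open Polynomial

theorem sq_mul_sq_sub_one_nonneg (n : ℕ) : 0 ≤ (n : ℝ) ^ 2 * (n ^ 2 - 1) := by
  rcases n.eq_zero_or_pos with rfl | hn
  · simp
  · have : (1 : ℝ) ≤ n := by exact_mod_cast hn
    exact mul_nonneg (sq_nonneg _) (sub_nonneg.2 (one_le_pow₀ this))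

/-- `K` is the polynomial of degree less than `n` that represents evaluation at the left endpoint
`a` for the `L²(a, b)` inner product. A time reconstruction satisfies
`Û'' - V'' = K • j`. -/
def IsEvalKernel (a b : ℝ) (n : ℕ) (K : ℝ[X]) : Prop :=
  K ∈ degreeLT ℝ n ∧ ∀ r ∈ degreeLT ℝ n, polyIntegral a b (K * r) = r.eval a

theorem exists_isEvalKernel {a b : ℝ} (hab : a < b) (n : ℕ) : ∃ K, IsEvalKernel a b n K := by
  have : FiniteDimensional ℝ (degreeLT ℝ n) := (degreeLTEquiv ℝ n).symm.finiteDimensional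
  let B : degreeLT ℝ n →ₗ[ℝ] Module.Dual ℝ (degreeLT ℝ n) :=
    ((LinearMap.mul ℝ ℝ[X]).compr₂ (polyIntegral a b)).domRestrict₁₂ _ _
  have hBapply (p r : degreeLT ℝ n) : B p r = polyIntegral a b (p * r) := rfl
  have hB : Function.Injective B := by
    refine (injective_iff_map_eq_zero B).2 fun p hp => Subtype.ext ?_
    have hpp : polyIntegral a b (p * p) = 0 := by
      rw [← hBapply, hp]
      rfl
    exact eq_zero_of_polyIntegral_mul_sq_eq_zero hab (w := 1) (by simp) (by rwa [one_mul, sq])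
  have hBsurj : Function.Surjective B :=
    (LinearMap.injective_iff_surjective_of_finrank_eq_finrank
      Subspace.dual_finrank_eq.symm).1 hB
  obtain ⟨K, hK⟩ := hBsurj ((leval a).domRestrict _)
  refine ⟨K, K.2, fun r hr => ?_⟩
  rw [← hBapply K ⟨r, hr⟩, hK]
  rfl

namespace IsEvalKernel

variable {a b : ℝ} {n : ℕ} {K : ℝ[X]}

theorem eq_C_mul (hab : a < b) (hK : IsEvalKernel a b n K) {p : ℝ[X]} {c : ℝ}
    (hp : p ∈ degreeLT ℝ n)
    (hpr : ∀ r ∈ degreeLT ℝ n, polyIntegral a b (p * r) = c * r.eval a) : p = C c * K := by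
  set d := p - C c * K with hd
  have hdn : d ∈ degreeLT ℝ n := by
    rw [hd, C_mul']
    exact sub_mem hp (Submodule.smul_mem _ c hK.1)
  have hdd : polyIntegral a b (d * d) = 0 := by
    nth_rw 1 [hd]
    rw [sub_mul, map_sub, mul_assoc, polyIntegral_C_mul, hpr d hdn, hK.2 d hdn, sub_self]
  exact sub_eq_zero.1 <|
    eq_zero_of_polyIntegral_mul_sq_eq_zero hab (w := 1) (by simp) (by rwa [one_mul, sq])

theorem comp_affine (hab : a < b) (hK : IsEvalKernel a b n K) :
    IsEvalKernel 0 1 n (C (b - a) * K.comp (C (b - a) * X + C a)) := by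
  have hba : b - a ≠ 0 := (sub_pos.2 hab).ne'
  set φ : ℝ[X] := C (b - a) * X + C a with hφ
  set ψ : ℝ[X] := C (b - a)⁻¹ * X + C (-((b - a)⁻¹ * a)) with hψ
  have hψφ : ψ.comp φ = X := by
    have hC : (C (b - a)⁻¹ * C (b - a) : ℝ[X]) = 1 := by rw [← C_mul, inv_mul_cancel₀ hba, C_1]
    simp only [hψ, hφ, add_comp, mul_comp, C_comp, X_comp, C_neg, C_mul, neg_comp]
    linear_combination X * hC
  refine ⟨?_, fun r hr => ?_⟩
  · rw [C_mul']
    exact Submodule.smul_mem _ _ (comp_mem_degreeLT hK.1 natDegree_linear_le)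
  · have hψr : r.comp ψ ∈ degreeLT ℝ n := comp_mem_degreeLT hr natDegree_linear_le
    calc polyIntegral 0 1 (C (b - a) * K.comp φ * r)
        = (b - a) * polyIntegral 0 1 ((K * r.comp ψ).comp φ) := by
          rw [mul_assoc, polyIntegral_C_mul, mul_comp, comp_assoc, hψφ, comp_X]
      _ = (r.comp ψ).eval a := by rw [polyIntegral_comp_affine, hK.2 _ hψr]
      _ = r.eval 0 := by simp [hψ, eval_comp]

theorem polyIntegral_mul_X_mul_eq_zero (hK : IsEvalKernel 0 b n K) {p : ℝ[X]}
    (hp : p ∈ degreeLT ℝ (n - 1)) : polyIntegral 0 b (K * (X * p)) = 0 := by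
  rw [hK.2 _ (X_mul_mem_degreeLT hp), eval_mul, eval_X, zero_mul]

/- The defect `E` of the equation has degree less than `n - 1`, while `K` is orthogonal to `x E`
and, by symmetry of the operator, so is `jacobiOp 1 0 K`. Hence `∫ x E² = 0`. -/
theorem jacobiOp_add_eq_zero (hK : IsEvalKernel 0 1 n K) :
    jacobiOp 1 0 K + C ((n - 1) * (n + 1) : ℝ) * K = 0 := by
  set E := jacobiOp 1 0 K + C ((n - 1) * (n + 1) : ℝ) * K with hE
  have hEn : E ∈ degreeLT ℝ (n - 1) := by
    simpa only [add_zero] using jacobiOp_add_C_mul_mem_degreeLT 1 0 hK.1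
  have hKE : polyIntegral 0 1 (X * (K * E)) = 0 := by
    rw [mul_left_comm]
    exact hK.polyIntegral_mul_X_mul_eq_zero hEn
  have hJE : polyIntegral 0 1 (X * (jacobiOp 1 0 K * E)) = 0 := by
    calc polyIntegral 0 1 (X * (jacobiOp 1 0 K * E))
        = polyIntegral 0 1 (X * (K * jacobiOp 1 0 E)) := by
          simpa using polyIntegral_jacobiOp_mul 1 0 K E
      _ = 0 := by
          rw [mul_left_comm]
          exact hK.polyIntegral_mul_X_mul_eq_zero (jacobiOp_mem_degreeLT 1 0 hEn)
  refine eq_zero_of_polyIntegral_mul_sq_eq_zero zero_lt_one (w := X) (by simp +contextual) ?_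
  have hsplit : X * E ^ 2
      = X * (jacobiOp 1 0 K * E) + C ((n - 1) * (n + 1) : ℝ) * (X * (K * E)) := by
    rw [hE]; ring
  rw [hsplit, map_add, polyIntegral_C_mul, hJE, hKE, mul_zero, add_zero]

theorem two_mul_eval_derivative_zero (hK : IsEvalKernel 0 1 n K) :
    2 * (derivative K).eval 0 = -((n - 1) * (n + 1) * K.eval 0) := by
  have ode := congrArg (eval 0) hK.jacobiOp_add_eq_zero
  simp only [eval_add, eval_jacobiOp, eval_mul, eval_C, eval_zero] at ode
  linear_combination ode

theorem eval_derivative_one (hK : IsEvalKernel 0 1 n K) :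
    (derivative K).eval 1 = (n - 1) * (n + 1) * K.eval 1 := by
  have ode := congrArg (eval 1) hK.jacobiOp_add_eq_zero
  simp only [eval_add, eval_jacobiOp, eval_mul, eval_C, eval_zero] at ode
  linear_combination -ode

theorem sq_eval_one_eq_eval_zero (hK : IsEvalKernel 0 1 n K) : K.eval 1 ^ 2 = K.eval 0 := by
  have hd : derivative (X * K ^ 2) = K * K + C 2 * (K * (X * derivative K)) := by
    
    rw [derivative_mul, derivative_X, derivative_sq]; ring
  have h := polyIntegral_derivative 0 1 (X * K ^ 2)
  rw [hd, map_add, polyIntegral_C_mul, hK.2 K hK.1,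
    hK.polyIntegral_mul_X_mul_eq_zero (derivative_mem_degreeLT hK.1)] at h
  simpa using h.symm

theorem sq_eval_one_sub_sq_eval_zero (hK : IsEvalKernel 0 1 n K) :
    K.eval 1 ^ 2 - K.eval 0 ^ 2 = 2 * (derivative K).eval 0 := by
  have hd : derivative (K ^ 2) = C 2 * (K * derivative K) := by
    rw [derivative_sq]; ring
  have h := polyIntegral_derivative 0 1 (K ^ 2)
  rw [hd, polyIntegral_C_mul, hK.2 _ (degreeLT_mono (n.sub_le 1) (derivative_mem_degreeLT hK.1))]
    at h
  simpa using h.symm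

theorem eval_left_ne_zero (hab : a < b) (hK : IsEvalKernel a b n K) (hn : n ≠ 0) :
    K.eval a ≠ 0 := by
  intro h
  have hK0 : K = 0 := eq_zero_of_polyIntegral_mul_sq_eq_zero hab (w := 1) (by simp)
    (by rw [one_mul, sq, hK.2 K hK.1, h])
  have hone := hK.2 1 (by simpa [mem_degreeLT] using hn.bot_lt)
  simp [hK0] at hone

theorem eval_zero (hK : IsEvalKernel 0 1 n K) : K.eval 0 = n ^ 2 := by
  rcases eq_or_ne n 0 with rfl | hn
  · have : K = 0 := by simpa [mem_degreeLT] using hK.1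
    simp [this]
  · have h : K.eval 0 * (K.eval 0 - n ^ 2) = 0 := by
      linear_combination hK.sq_eval_one_eq_eval_zero - hK.sq_eval_one_sub_sq_eval_zero
        - hK.two_mul_eval_derivative_zero
    exact sub_eq_zero.1 ((mul_eq_zero.1 h).resolve_left (hK.eval_left_ne_zero zero_lt_one hn))

theorem eval_derivative_zero (hK : IsEvalKernel 0 1 n K) :
    (derivative K).eval 0 = -(n ^ 2 * (n ^ 2 - 1) / 2) := by
  have h := hK.two_mul_eval_derivative_zero
  rw [hK.eval_zero] at h
  linear_combination h / 2

theorem sq_eval_derivative_one_le (hK : IsEvalKernel 0 1 n K) (hn : 2 ≤ n) :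
    (derivative K).eval 1 ^ 2 ≤ (n ^ 2 * (n ^ 2 - 1) / 2 : ℝ) ^ 2 := by
  have hn' : (2 : ℝ) ≤ n := by exact_mod_cast hn
  calc (derivative K).eval 1 ^ 2 = ((n : ℝ) ^ 2 - 1) ^ 2 * n ^ 2 := by
        rw [hK.eval_derivative_one, mul_pow, hK.sq_eval_one_eq_eval_zero, hK.eval_zero]
        ring
    _ ≤ ((n : ℝ) ^ 2 - 1) ^ 2 * (n ^ 2 * (n / 2) ^ 2) := by
        gcongr
        exact le_mul_of_one_le_right (sq_nonneg _) (one_le_pow₀ (by linarith))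
    _ = (n ^ 2 * (n ^ 2 - 1) / 2 : ℝ) ^ 2 := by ring

theorem abs_eval_derivative_le_of_mem_Icc_zero_one (hK : IsEvalKernel 0 1 n K) {s : ℝ}
    (hs : s ∈ Set.Icc (0 : ℝ) 1) : |(derivative K).eval s| ≤ n ^ 2 * (n ^ 2 - 1) / 2 := by
  refine abs_le_of_sq_le_sq ?_ (div_nonneg (sq_mul_sq_sub_one_nonneg n) zero_le_two)
  rcases le_or_gt n 2 with hn | hn
  · have hconst : derivative K = C ((derivative K).coeff 0) := by
      have hdeg := degreeLT_mono (by omega : n - 1 ≤ 1) (derivative_mem_degreeLT hK.1)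
      rw [mem_degreeLT, Nat.cast_one] at hdeg
      exact eq_C_of_degree_le_zero (Nat.WithBot.lt_one_iff_le_zero.1 hdeg)
    have hs0 : (derivative K).eval s = (derivative K).eval 0 := by rw [hconst, eval_C, eval_C]
    rw [hs0, hK.eval_derivative_zero, neg_sq]
  · have hl : (0 : ℝ) < n ^ 2 - 4 := by
      have : (3 : ℝ) ≤ n := by exact_mod_cast hn
      nlinarith
    have ode : jacobiOp (1 + 1) (0 + 1) (derivative K) + C (n ^ 2 - 4 : ℝ) * derivative K = 0 := by
      have h := congrArg derivative hK.jacobiOp_add_eq_zero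
      rw [derivative_add, derivative_C_mul, derivative_jacobiOp, derivative_zero] at h
      have hl_eq : (n ^ 2 - 4 : ℝ) = (n - 1) * (n + 1) - (1 + 0 + 2) := by ring
      rw [hl_eq, C_sub]
      linear_combination h
    refine (sq_eval_le_max_of_jacobiOp_add_eq_zero (by norm_num) hl ode hs).trans (max_le ?_ ?_)
    · rw [hK.eval_derivative_zero, neg_sq]
    · exact hK.sq_eval_derivative_one_le hn.le

theorem abs_eval_derivative_le (hab : a < b) (hK : IsEvalKernel a b n K) {t : ℝ}
    (ht : t ∈ Set.Icc a b) :
    |(derivative K).eval t| ≤ n ^ 2 * (n ^ 2 - 1) / 2 * (b - a)⁻¹ ^ 2 := by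
  have hba : 0 < b - a := sub_pos.2 hab
  set s := (b - a)⁻¹ * (t - a) with hs
  have hst : (b - a) * s + a = t := by rw [hs]; field_simp; ring
  have hs01 : s ∈ Set.Icc (0 : ℝ) 1 :=
    ⟨mul_nonneg (inv_nonneg.2 hba.le) (sub_nonneg.2 ht.1),
      (inv_mul_le_one₀ hba).2 (sub_le_sub_right ht.2 a)⟩
  have hderiv : (derivative (C (b - a) * K.comp (C (b - a) * X + C a))).eval s
      = (b - a) ^ 2 * (derivative K).eval t := by
    simp only [derivative_C_mul, derivative_comp, derivative_add, derivative_C, derivative_X,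
      mul_one, add_zero, eval_mul, eval_C, eval_comp, eval_add, eval_X, hst]
    ring
  have hbound := (hK.comp_affine hab).abs_eval_derivative_le_of_mem_Icc_zero_one hs01
  rw [hderiv, abs_mul, abs_of_pos (pow_pos hba 2)] at hbound
  rwa [inv_pow, ← div_eq_mul_inv, le_div_iff₀' (pow_pos hba 2)]

end IsEvalKernel

end EvalKernel

section PolyEval

open Polynomial

variable {E G : Type*} [NormedAddCommGroup E] [NormedSpace ℝ E]
  [NormedAddCommGroup G] [NormedSpace ℝ G]

theorem map_polyEval (L : E →ₗ[ℝ] G) (k : ℕ) (c : ℕ → E) (t : ℝ) :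
    L (polyEval k c t) = polyEval k (L ∘ c) t := by
  simp [polyEval]

theorem comp_dC (L : E →ₗ[ℝ] G) (c : ℕ → E) : L ∘ dC c = dC (L ∘ c) := by
  ext i
  simp [dC]

theorem dC_zero : dC (0 : ℕ → E) = 0 := by
  ext i
  simp [dC]

theorem polyEval_zero (k : ℕ) (t : ℝ) : polyEval k (0 : ℕ → E) t = 0 := by
  simp [polyEval]

theorem dC_coeff (p : ℝ[X]) : dC p.coeff = (derivative p).coeff := by
  ext i
  rw [dC, coeff_derivative, smul_eq_mul, mul_comm]

theorem polyEval_coeff {k : ℕ} {p : ℝ[X]} (hp : p ∈ degreeLT ℝ (k + 1)) (t : ℝ) :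
    polyEval k p.coeff t = p.eval t := by
  simp [polyEval, eval_eq_sum_degreeLTEquiv hp, Finset.sum_range, degreeLTEquiv, mul_comm]

theorem exists_mem_degreeLT_coeff_eq {R : Type*} [Semiring R] {n : ℕ} {c : ℕ → R}
    (hc : ∀ i, n ≤ i → c i = 0) : ∃ p ∈ degreeLT R n, p.coeff = c := by
  classical
  refine ⟨ofFn n fun i => c i, mem_degreeLT.2 (ofFn_degree_lt _), funext fun i => ?_⟩
  rcases lt_or_ge i n with hi | hi
  · exact ofFn_coeff_eq_val_of_lt _ hi
  · rw [ofFn_coeff_eq_zero_of_ge _ hi, hc i hi]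

theorem eq_zero_of_polyEval_eq_zero {k : ℕ} {c : ℕ → ℝ} (hc : ∀ i, k < i → c i = 0)
    (h : ∀ t, polyEval k c t = 0) : c = 0 := by
  obtain ⟨p, hp, rfl⟩ := exists_mem_degreeLT_coeff_eq hc
  have hp0 : p = 0 := Polynomial.funext fun t => by rw [← polyEval_coeff hp, h, eval_zero]
  rw [hp0]
  exact funext coeff_zero

end PolyEval

section TimeReconstruction

open Polynomial

variable {H : Type*} [NormedAddCommGroup H] [InnerProductSpace ℝ H]

theorem inner_polyEval (x : H) (k : ℕ) (c : ℕ → H) (t : ℝ) :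
    ⟪x, polyEval k c t⟫ = polyEval k (innerₛₗ ℝ x ∘ c) t :=
  map_polyEval (innerₛₗ ℝ x) k c t

namespace IsTimeRecon

variable {t₀ t₁ : ℝ} {q : ℕ} {v u : ℕ → H} {j x : H}

theorem integral_inner_second_deriv_mul_eval (hu : IsTimeRecon t₀ t₁ q v j u)
    (hx : innerₛₗ ℝ x ∘ v = 0) {r : ℝ[X]} (hr : r ∈ degreeLT ℝ q) :
    ∫ t in t₀..t₁, ⟪x, polyEval (q + 1) (dC (dC u)) t⟫ * r.eval t = ⟪x, j⟫ * r.eval t₀ := by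
  have hv'' (t : ℝ) : ⟪x, polyEval (q + 1) (dC (dC v)) t⟫ = 0 := by
    rw [inner_polyEval, comp_dC, comp_dC, hx, dC_zero, dC_zero, polyEval_zero]
  have hw (t : ℝ) : polyEval (q + 1) (LinearMap.toSpanSingleton ℝ H x ∘ r.coeff) t
      = r.eval t • x := by
    rw [← map_polyEval, polyEval_coeff (degreeLT_mono (by omega) hr),
      LinearMap.toSpanSingleton_apply]
  have hweak := hu.2.1 (LinearMap.toSpanSingleton ℝ H x ∘ r.coeff) fun i hi => by
    rw [mem_degreeLT, degree_lt_iff_coeff_zero] at hr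
    simp [hr i hi]
  simpa only [hw, inner_smul_right, real_inner_comm x, inner_sub_right, hv'', sub_zero,
    mul_comm (r.eval _)] using hweak

theorem innerₛₗ_comp_dC_dC (hu : IsTimeRecon t₀ t₁ q v j u) (h01 : t₀ < t₁) {K : ℝ[X]}
    (hK : IsEvalKernel t₀ t₁ q K) (hx : innerₛₗ ℝ x ∘ v = 0) :
    innerₛₗ ℝ x ∘ dC (dC u) = (C ⟪x, j⟫ * K).coeff := by
  obtain ⟨p, hp, hpu⟩ := exists_mem_degreeLT_coeff_eq (n := q) (c := innerₛₗ ℝ x ∘ dC (dC u))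
    fun i hi => by simp [dC, hu.1 (i + 1 + 1) (by omega)]
  have hpeval (t : ℝ) : ⟪x, polyEval (q + 1) (dC (dC u)) t⟫ = p.eval t := by
    rw [inner_polyEval, ← hpu, polyEval_coeff (degreeLT_mono (by omega) hp)]
  rw [← hpu, hK.eq_C_mul h01 hp fun r hr => ?_]
  simpa only [hpeval, polyIntegral_apply, eval_mul]
    using hu.integral_inner_second_deriv_mul_eval hx hr

theorem inner_third_deriv (hu : IsTimeRecon t₀ t₁ q v j u) (h01 : t₀ < t₁) {K : ℝ[X]}
    (hK : IsEvalKernel t₀ t₁ q K) (hx : innerₛₗ ℝ x ∘ v = 0) (t : ℝ) :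
    ⟪x, polyEval (q + 1) (dC (dC (dC u))) t⟫ = (derivative K).eval t * ⟪x, j⟫ := by
  have hK' : derivative (C ⟪x, j⟫ * K) ∈ degreeLT ℝ (q + 1 + 1) := by
    rw [C_mul']
    exact degreeLT_mono (by omega) (derivative_mem_degreeLT (Submodule.smul_mem _ _ hK.1))
  rw [inner_polyEval, comp_dC, hu.innerₛₗ_comp_dC_dC h01 hK hx, dC_coeff,
    polyEval_coeff hK', derivative_C_mul, eval_mul, eval_C, mul_comm]

end IsTimeRecon

theorem IsOrthProj.apply_eq_self_of_forall_mem_orthogonal {F : Submodule ℝ H} {P : H →L[ℝ] H}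
    (hP : IsOrthProj F P) {z : H} (hz : ∀ x ∈ Fᗮ, ⟪x, z⟫ = 0) : P z = z := by
  have hzP : z - P z ∈ Fᗮ := (F.mem_orthogonal' _).2 (hP z).2
  refine (sub_eq_zero.1 (inner_self_eq_zero (𝕜 := ℝ).1 ?_)).symm
  rw [inner_sub_right, hz _ hzP, (hP z).2 _ (hP z).1, sub_zero]

theorem spatial_error_third_deriv_eq {F : Submodule ℝ H} {P : H →L[ℝ] H} (hP : IsOrthProj F P)
    {t₀ t₁ : ℝ} (h01 : t₀ < t₁) {q : ℕ} {v : ℕ → H} (hv : ∀ i, q < i → v i = 0)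
    (hvF : ∀ t : ℝ, polyEval (q + 1) v t ∈ F) {w₀ : H} {u : ℕ → H}
    (hu : IsTimeRecon t₀ t₁ q v (polyEval (q + 1) (dC v) t₀ - w₀) u)
    {K : ℝ[X]} (hK : IsEvalKernel t₀ t₁ q K) (t : ℝ) :
    polyEval (q + 1) (dC (dC (dC u))) t - P (polyEval (q + 1) (dC (dC (dC u))) t)
      = -(derivative K).eval t • (w₀ - P w₀) := by
  have hxv {x : H} (hx : x ∈ Fᗮ) : innerₛₗ ℝ x ∘ v = 0 :=
    eq_zero_of_polyEval_eq_zero (k := q + 1) (fun i hi => by simp [hv i (by omega)]) fun s => by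
      rw [← inner_polyEval]
      exact F.inner_left_of_mem_orthogonal (hvF s) hx
  have hv' : P (polyEval (q + 1) (dC v) t₀) = polyEval (q + 1) (dC v) t₀ :=
    hP.apply_eq_self_of_forall_mem_orthogonal fun x hx => by
      rw [inner_polyEval, comp_dC, hxv hx, dC_zero, polyEval_zero]
  have hu''' := hP.apply_eq_self_of_forall_mem_orthogonal (z := polyEval (q + 1) (dC (dC (dC u))) t
      - (derivative K).eval t • (polyEval (q + 1) (dC v) t₀ - w₀)) fun x hx => by
    rw [inner_sub_right, hu.inner_third_deriv h01 hK (hxv hx), inner_smul_right, sub_self]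
  rw [map_sub, map_smul, map_sub, hv'] at hu'''
  linear_combination (norm := module) -hu'''

theorem sq_mul_sq_sub_one_div_two_le {x : ℝ} (hx : 0 ≤ x) :
    x ^ 2 * (x ^ 2 - 1) / 2 ≤ 8 * √6 * x * (x + 1) ^ 3 := by
  have h6 : 1 ≤ √6 := Real.one_le_sqrt.2 (by norm_num)
  calc x ^ 2 * (x ^ 2 - 1) / 2 ≤ 8 * 1 * x * (x + 1) ^ 3 := by
        have : 0 ≤ x * x := mul_nonneg hx hx
        have : 0 ≤ x ^ 3 := pow_nonneg hx 3
        have : 0 ≤ x ^ 4 := pow_nonneg hx 4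
        nlinarith
    _ ≤ 8 * √6 * x * (x + 1) ^ 3 := by gcongr

theorem spatial_error_time_reconstruction_third_deriv_general
    {G : Type*} [SeminormedAddCommGroup G] [NormedSpace ℝ G] (M : H →ₗ[ℝ] G)
    {F : Submodule ℝ H} {P : H →L[ℝ] H} (hP : IsOrthProj F P)
    {t₀ t₁ : ℝ} (h01 : t₀ < t₁) {q : ℕ} {v : ℕ → H} (hv : ∀ i, q < i → v i = 0)
    (hvF : ∀ t : ℝ, polyEval (q + 1) v t ∈ F) {w₀ : H} {u : ℕ → H}
    (hu : IsTimeRecon t₀ t₁ q v (polyEval (q + 1) (dC v) t₀ - w₀) u)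
    {t : ℝ} (ht : t ∈ Set.Icc t₀ t₁) :
    ‖M (polyEval (q + 1) (dC (dC (dC u))) t - P (polyEval (q + 1) (dC (dC (dC u))) t))‖
      ≤ q ^ 2 * (q ^ 2 - 1) / 2 * (t₁ - t₀)⁻¹ ^ 2 * ‖M (w₀ - P w₀)‖ := by
  obtain ⟨K, hK⟩ := exists_isEvalKernel h01 q
  rw [spatial_error_third_deriv_eq hP h01 hv hvF hu hK, map_smul, norm_smul, norm_neg,
    Real.norm_eq_abs]
  gcongr
  exact hK.abs_eval_derivative_le h01 ht

end TimeReconstruction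

/-- Spatial error of the time reconstruction, third time derivative (Lemma 4.3, ℓ = 3):
`sup_{t ∈ [t₀,t₁]} ‖ρ₀ (Û - PÛ)'''(t)‖ ≤ 8√6 q(q+1)³ τ⁻² ‖ρ₀ P^⊥ w₀‖`, where `M` is the
multiplication operator by the nonnegative essentially bounded weight `ρ₀` on `L²(X, μ)`. -/
theorem spatial_error_time_reconstruction_third_deriv
    {X : Type*} [MeasurableSpace X] (μ : Measure X)
    (ρ₀ : X → ℝ) (hρ_meas : Measurable ρ₀) (hρ_nn : ∀ x, 0 ≤ ρ₀ x)
    (hρ_bd : ∃ C : ℝ, ∀ᵐ x ∂μ, ρ₀ x ≤ C)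
    (M : Lp ℝ 2 μ →ₗ[ℝ] Lp ℝ 2 μ)
    (hM : ∀ f : Lp ℝ 2 μ, (M f : X → ℝ) =ᵐ[μ] fun x => ρ₀ x * f x)
    (F : Submodule ℝ (Lp ℝ 2 μ)) (hF : IsClosed (F : Set (Lp ℝ 2 μ)))
    (P : Lp ℝ 2 μ →L[ℝ] Lp ℝ 2 μ) (hP : IsOrthProj F P)
    (t₀ t₁ : ℝ) (h01 : t₀ < t₁) (q : ℕ) (hq : 2 ≤ q)
    (v : ℕ → Lp ℝ 2 μ) (hv : ∀ i, q < i → v i = 0)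
    (hvF : ∀ t : ℝ, polyEval (q + 1) v t ∈ F)
    (w₀ : Lp ℝ 2 μ) (u : ℕ → Lp ℝ 2 μ)
    (hu : IsTimeRecon t₀ t₁ q v (polyEval (q + 1) (dC v) t₀ - w₀) u) :
    (⨆ t : Set.Icc t₀ t₁,
        ‖M (polyEval (q + 1) (dC (dC (dC u))) t - P (polyEval (q + 1) (dC (dC (dC u))) t))‖)
      ≤ 8 * Real.sqrt 6 * (q : ℝ) * ((q : ℝ) + 1) ^ 3 * ((t₁ - t₀)⁻¹) ^ 2
        * ‖M (w₀ - P w₀)‖ := by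
  refine Real.iSup_le (fun t => ?_) (by positivity)
  refine (spatial_error_time_reconstruction_third_deriv_general M hP h01 hv hvF hu t.2).trans ?_
  gcongr
  exact sq_mul_sq_sub_one_div_two_le q.cast_nonneg
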